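/- Let d̄ : ℕ × ℕ → ℤ satisfy the master degree equation d̄_{l+1,m+1} = d̄_{l+1,m} + d̄_{l,m+1} + d̄_{l-1,m-1} - d̄_{l,m-1} - d̄_{l-1,m} for all l,m ≥ 1, together with the Case II boundary values d̄_{l,0} = d̄_{0,m} = 1 for all l,m ≥ 0, d̄_{1,m} = 2m + 1 for all m ≥ 1, and d̄_{l,1} = 2l + 1 for all l ≥ 1. Then d̄_{l+1,m+1} - d̄_{l,m} = 2l + 2m + 2 for all l,m ≥ 0, and in particular d̄_{l,l} = 2l² + 1 for all l ≥ 0, i.e. the reduced degree grows quadratically along the diagonal with constant second difference 4. -/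

import Mathlib

/-!
Regrouping its six terms, the master degree equation says that the diagonal difference
`δ_{l,m} = d̄_{l+1,m+1} - d̄_{l,m}` has vanishing mixed difference. Hence `δ` separates as
`δ_{l,m} = δ_{l,0} + δ_{0,m} - δ_{0,0}` and is read off from the boundary values alone;
the values of `d̄` on the diagonal follow by telescoping.
-/

section AddCommGroup

variable {G : Type*} [AddCommGroup G]

/-- The master degree equation for an array `d`, with both indices shifted up by one so that
`l - 1` and `m - 1` do not occur. -/
def MasterDegreeEq (d : ℕ × ℕ → G) : Prop :=
  ∀ l m : ℕ, d (l + 2, m + 2) =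
    d (l + 2, m + 1) + d (l + 1, m + 2) + d (l, m) - d (l + 1, m) - d (l, m + 1)

/-- The forward difference of an array along the direction `(1, 1)`, in which the master degree
equation separates. -/
def diagDiff (d : ℕ × ℕ → G) (p : ℕ × ℕ) : G :=
  d (p.1 + 1, p.2 + 1) - d p

theorem eq_add_sub_of_mixed_sub_eq {f : ℕ × ℕ → G}
    (hf : ∀ l m : ℕ, f (l + 1, m + 1) - f (l + 1, m) = f (l, m + 1) - f (l, m)) (l m : ℕ) :
    f (l, m) = f (l, 0) + f (0, m) - f (0, 0) := by
  have row_diff (m : ℕ) : f (l, m + 1) - f (l, m) = f (0, m + 1) - f (0, m) := by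
    induction l with
    | zero => rfl
    | succ l ih => exact (hf l m).trans ih
  induction m with
  | zero => rw [add_sub_cancel_right]
  | succ m ih =>
    calc
      f (l, m + 1) = f (l, m) + (f (0, m + 1) - f (0, m)) := by
        rw [← row_diff, add_sub_cancel]
      _ = f (l, 0) + f (0, m + 1) - f (0, 0) := by
        rw [ih]
        abel

theorem MasterDegreeEq.diagDiff_mixed_sub_eq {d : ℕ × ℕ → G} (hd : MasterDegreeEq d) (l m : ℕ) :
    diagDiff d (l + 1, m + 1) - diagDiff d (l + 1, m) =
      diagDiff d (l, m + 1) - diagDiff d (l, m) := by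
  simp only [diagDiff, add_assoc, Nat.reduceAdd]
  rw [hd l m]
  abel

theorem MasterDegreeEq.diagDiff_eq {d : ℕ × ℕ → G} (hd : MasterDegreeEq d) (l m : ℕ) :
    diagDiff d (l, m) = diagDiff d (l, 0) + diagDiff d (0, m) - diagDiff d (0, 0) :=
  eq_add_sub_of_mixed_sub_eq hd.diagDiff_mixed_sub_eq l m

theorem diag_eq_add_sum_diagDiff (d : ℕ × ℕ → G) (l : ℕ) :
    d (l, l) = d (0, 0) + ∑ k ∈ Finset.range l, diagDiff d (k, k) :=
  Finset.eq_sum_range_sub (fun k ↦ d (k, k)) l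

end AddCommGroup

theorem sum_range_two_mul_add_two_mul_add_two {R : Type*} [Semiring R] (n : ℕ) :
    ∑ k ∈ Finset.range n, (2 * k + 2 * k + 2 : R) = 2 * n ^ 2 := by
  have sum_nat : ∑ k ∈ Finset.range n, (2 * k + 2 * k + 2) = 2 * n ^ 2 := by
    induction n with
    | zero => rfl
    | succ n ih =>
      rw [Finset.sum_range_succ, ih]
      ring
  exact_mod_cast congrArg (Nat.cast : ℕ → R) sum_nat

theorem stmt9_general {R : Type*} [Ring R] (d : ℕ × ℕ → R) (hd : MasterDegreeEq d)
    (hl0 : ∀ l : ℕ, d (l, 0) = 1)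
    (h0m : ∀ m : ℕ, d (0, m) = 1)
    (h1m : ∀ m : ℕ, 1 ≤ m → d (1, m) = 2 * m + 1)
    (hl1 : ∀ l : ℕ, 1 ≤ l → d (l, 1) = 2 * l + 1) :
    (∀ l m : ℕ, d (l + 1, m + 1) - d (l, m) = 2 * l + 2 * m + 2) ∧
      (∀ l : ℕ, d (l, l) = 2 * l ^ 2 + 1) := by
  have diagDiff_left (l : ℕ) : diagDiff d (l, 0) = 2 * l + 2 := by
    simp [diagDiff, hl1, hl0, mul_add]
  have diagDiff_right (m : ℕ) : diagDiff d (0, m) = 2 * m + 2 := by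
    simp [diagDiff, h1m, h0m, mul_add]
  have diagDiff_apply (l m : ℕ) : diagDiff d (l, m) = 2 * l + 2 * m + 2 := by
    rw [hd.diagDiff_eq, diagDiff_left, diagDiff_right, diagDiff_left, Nat.cast_zero, mul_zero]
    abel
  refine ⟨diagDiff_apply, fun l ↦ ?_⟩
  simp_rw [diag_eq_add_sum_diagDiff d l, diagDiff_apply, hl0]
  rw [sum_range_two_mul_add_two_mul_add_two, add_comm]

/-- If `d̄` satisfies the master degree equation (for `l,m ≥ 1`, stated
with shifted indices) with Case II boundary values `d̄_{l,0} = d̄_{0,m} = 1` for all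
`l,m ≥ 0`, `d̄_{1,m} = 2m+1` for `m ≥ 1` and `d̄_{l,1} = 2l+1` for `l ≥ 1`, then
`d̄_{l+1,m+1} - d̄_{l,m} = 2l + 2m + 2` for all `l,m ≥ 0`, and in particular
`d̄_{l,l} = 2l² + 1` for all `l ≥ 0`: quadratic growth along the diagonal with
constant second difference `4`. -/
theorem stmt9 (db : ℕ × ℕ → ℤ)
    (hrec : ∀ l m : ℕ, db (l + 2, m + 2) =
      db (l + 2, m + 1) + db (l + 1, m + 2) + db (l, m) - db (l + 1, m) - db (l, m + 1))
    (hl0 : ∀ l : ℕ, db (l, 0) = 1)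
    (h0m : ∀ m : ℕ, db (0, m) = 1)
    (h1m : ∀ m : ℕ, 1 ≤ m → db (1, m) = 2 * m + 1)
    (hl1 : ∀ l : ℕ, 1 ≤ l → db (l, 1) = 2 * l + 1) :
    (∀ l m : ℕ, db (l + 1, m + 1) - db (l, m) = 2 * l + 2 * m + 2) ∧
      (∀ l : ℕ, db (l, l) = 2 * l ^ 2 + 1) :=
  stmt9_general db hrec hl0 h0m h1m hl1
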